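/- arXiv:2304.14990 — 2 statements merged into one kernel-verified Lean document; each statement's English description precedes it below -/
import Mathlib

section
/- There exist a finite Stackelberg game (u_l, u_f) (with m = 3 leader actions, n = 2 follower actions, and real-valued utilities) and a δ > 0 such that, under the alternative δ-optimal response set defined with a non-strict inequality, BR≥_δ(x) = {j ∈ [n] : u_f(x, j) ≥ max_{j' ∈ [n]} u_f(x, j') − δ}, the supremum sup_{x ∈ Δ^m} min_{j ∈ BR≥_δ(x)} u_l(x, j) is NOT attained by any leader strategy x ∈ Δ^m. Hence the δ-RSE may fail to exist if the δ-optimal response set is defined with '≥' instead of '>'. -/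
open Finset Set

noncomputable section

/-- The simplex of mixed strategies over `m` actions. -/
def simplex (m : ℕ) : Set (Fin m → ℝ) := stdSimplex ℝ (Fin m)

/-- Mixed-strategy extension of a utility matrix: `u(x, j) = ∑ i, x i * u i j`. -/
def mixU {m n : ℕ} (u : Fin m → Fin n → ℝ) (x : Fin m → ℝ) (j : Fin n) : ℝ :=
  ∑ i, x i * u i j

/-- The follower's δ-optimal response set (strict inequality):
`BR_δ(x) = {j : u_f(x,j) > max_{j'} u_f(x,j') - δ}`. -/
def BRd {m n : ℕ} (uf : Fin m → Fin n → ℝ) (δ : ℝ) (x : Fin m → ℝ) : Set (Fin n) :=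
  {j | mixU uf x j > (⨆ j', mixU uf x j') - δ}

/-- The follower's exact best-response set. -/
def BR0 {m n : ℕ} (uf : Fin m → Fin n → ℝ) (x : Fin m → ℝ) : Set (Fin n) :=
  {j | mixU uf x j = ⨆ j', mixU uf x j'}

/-- Worst-case leader utility over the follower's δ-optimal response set:
`min_{j ∈ BR_δ(x)} u_l(x, j)`. -/
def valBR {m n : ℕ} (ul uf : Fin m → Fin n → ℝ) (δ : ℝ) (x : Fin m → ℝ) : ℝ :=
  sInf (mixU ul x '' BRd uf δ x)

/-- The δ-RSE leader utility `u_RSE(δ) = sup_{x ∈ Δ^m} min_{j ∈ BR_δ(x)} u_l(x, j)`. -/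
def uRSE {m n : ℕ} (ul uf : Fin m → Fin n → ℝ) (δ : ℝ) : ℝ :=
  sSup (valBR ul uf δ '' simplex m)

/-- The SSE leader utility `u_SSE = sup_{x ∈ Δ^m} max_{j ∈ BR_0(x)} u_l(x, j)`. -/
def uSSE {m n : ℕ} (ul uf : Fin m → Fin n → ℝ) : ℝ :=
  sSup ((fun x => sSup (mixU ul x '' BR0 uf x)) '' simplex m)

/-- The maximin leader utility `u_MM = sup_{x ∈ Δ^m} min_{j ∈ [n]} u_l(x, j)`. -/
def uMM {m n : ℕ} (ul : Fin m → Fin n → ℝ) : ℝ :=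
  sSup ((fun x => ⨅ j, mixU ul x j) '' simplex m)

/-- The inducibility gap
`Δ = min_{j} sup_{x ∈ Δ^m} min_{j' ≠ j} (u_f(x, j) - u_f(x, j'))`. -/
def indGap {m n : ℕ} (uf : Fin m → Fin n → ℝ) : ℝ :=
  ⨅ j, sSup ((fun x => ⨅ j' : {k : Fin n // k ≠ j}, (mixU uf x j - mixU uf x j'.1)) '' simplex m)

/-- The alternative (closed) δ-optimal response set, defined with `≥`. -/
def BRge {m n : ℕ} (uf : Fin m → Fin n → ℝ) (δ : ℝ) (x : Fin m → ℝ) : Set (Fin n) :=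
  {j | mixU uf x j ≥ (⨆ j', mixU uf x j') - δ}

/-- Worst-case leader utility over the closed δ-optimal response set. -/
def valBRge {m n : ℕ} (ul uf : Fin m → Fin n → ℝ) (δ : ℝ) (x : Fin m → ℝ) : ℝ :=
  sInf (mixU ul x '' BRge uf δ x)

/-!
Let `t` be the weight the leader puts on a fixed action. Give one response a follower payoff
advantage of `2δ(1 - t)` over all the others, and pay the leader `1 + t` for it and `0` for the
others. That response is the only `δ`-optimal one exactly when `t < 1/2`, so the leader's worst-case
utility is `1 + t` for `t < 1/2` but drops to `0` as soon as `t` reaches `1/2`, because the closed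
response set already admits the others there. The supremum `3/2` is approached but not attained.
-/

section ClosedResponse

variable {m n : ℕ} {ul uf : Fin m → Fin n → ℝ} {δ : ℝ} {x : Fin m → ℝ} {j : Fin n}

lemma mem_BRge_iff : j ∈ BRge uf δ x ↔ ∀ j', mixU uf x j' - δ ≤ mixU uf x j := by
  have : Nonempty (Fin n) := ⟨j⟩
  simp only [BRge, Set.mem_ofPred_eq, ge_iff_le, sub_le_iff_le_add,
    ciSup_le_iff (Set.finite_range _).bddAbove]

lemma valBRge_le_of_mem_BRge (hj : j ∈ BRge uf δ x) : valBRge ul uf δ x ≤ mixU ul x j :=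
  csInf_le (Set.toFinite _).bddBelow (Set.mem_image_of_mem _ hj)

end ClosedResponse

lemma exists_mem_simplex_apply_eq {m : ℕ} {i₀ i₁ : Fin m} (hi : i₁ ≠ i₀) {c : ℝ}
    (hc : c ∈ Set.Icc (0 : ℝ) 1) : ∃ x ∈ simplex m, x i₀ = c := by
  refine ⟨c • Pi.single i₀ 1 + (1 - c) • Pi.single i₁ 1, ?_, ?_⟩
  · exact convex_stdSimplex ℝ (Fin m) (single_mem_stdSimplex ℝ i₀) (single_mem_stdSimplex ℝ i₁)
      hc.1 (sub_nonneg.mpr hc.2) (add_sub_cancel c 1)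
  · simp [hi.symm]

section Counterexample

variable {m n : ℕ}

/-- The utility matrix paying `base` for the response `j₀`, plus `bonus` when the leader plays `i₀`,
and `0` for every other response; both players' utilities in the counterexample have this form. -/
def bonusUtility (i₀ : Fin m) (j₀ : Fin n) (base bonus : ℝ) : Fin m → Fin n → ℝ :=
  fun i j => if j = j₀ then base + (if i = i₀ then bonus else 0) else 0

/-- The leader's utilities in the counterexample: `1 + x i₀` for the response `j₀`, else `0`. -/
def leaderUtility (i₀ : Fin m) (j₀ : Fin n) : Fin m → Fin n → ℝ :=
  bonusUtility i₀ j₀ 1 1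

/-- The follower's utilities in the counterexample: `2 * δ * (1 - x i₀)` for the response `j₀`,
else `0`. The factor `2` places the switch of the `δ`-optimal responses at `x i₀ = 1 / 2`. -/
def followerUtility (i₀ : Fin m) (j₀ : Fin n) (δ : ℝ) : Fin m → Fin n → ℝ :=
  bonusUtility i₀ j₀ (2 * δ) (-(2 * δ))

variable {i₀ : Fin m} {j₀ j : Fin n} {δ : ℝ} {x : Fin m → ℝ}

lemma mixU_bonusUtility_self (hx : x ∈ simplex m) (base bonus : ℝ) :
    mixU (bonusUtility i₀ j₀ base bonus) x j₀ = base + x i₀ * bonus := by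
  have sum_eq_one : ∑ i, x i = 1 := hx.2
  simp [mixU, bonusUtility, mul_add, Finset.sum_add_distrib, ← Finset.sum_mul, sum_eq_one]

lemma mixU_bonusUtility_of_ne (hj : j ≠ j₀) (base bonus : ℝ) :
    mixU (bonusUtility i₀ j₀ base bonus) x j = 0 := by
  simp [mixU, bonusUtility, hj]

lemma mixU_followerUtility_self (hx : x ∈ simplex m) :
    mixU (followerUtility i₀ j₀ δ) x j₀ = 2 * δ * (1 - x i₀) := by
  rw [followerUtility, mixU_bonusUtility_self hx]
  ring

lemma mixU_followerUtility_of_ne (hj : j ≠ j₀) : mixU (followerUtility i₀ j₀ δ) x j = 0 :=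
  mixU_bonusUtility_of_ne hj _ _

lemma self_mem_BRge_followerUtility (hδ : 0 ≤ δ) (hx : x ∈ simplex m) :
    j₀ ∈ BRge (followerUtility i₀ j₀ δ) δ x := by
  have advantage_nonneg : 0 ≤ 2 * δ * (1 - x i₀) :=
    mul_nonneg (by linarith) (sub_nonneg.mpr (mem_Icc_of_mem_stdSimplex hx i₀).2)
  refine mem_BRge_iff.mpr fun j' => ?_
  rw [mixU_followerUtility_self hx]
  rcases eq_or_ne j' j₀ with rfl | hj'
  · rw [mixU_followerUtility_self hx]
    linarith
  · rw [mixU_followerUtility_of_ne hj']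
    linarith

lemma mem_BRge_followerUtility_iff_of_ne (hδ : 0 < δ) (hx : x ∈ simplex m) (hj : j ≠ j₀) :
    j ∈ BRge (followerUtility i₀ j₀ δ) δ x ↔ 1 / 2 ≤ x i₀ := by
  rw [mem_BRge_iff, mixU_followerUtility_of_ne hj]
  constructor
  · intro hBR
    have advantage_le := hBR j₀
    rw [mixU_followerUtility_self hx] at advantage_le
    nlinarith
  · intro half_le j'
    rcases eq_or_ne j' j₀ with rfl | hj'
    · rw [mixU_followerUtility_self hx]
      nlinarith
    · rw [mixU_followerUtility_of_ne hj']
      linarith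

lemma valBRge_leaderUtility_eq_of_lt_half (hδ : 0 < δ) (hx : x ∈ simplex m) (h : x i₀ < 1 / 2) :
    valBRge (leaderUtility i₀ j₀) (followerUtility i₀ j₀ δ) δ x = 1 + x i₀ := by
  have BRge_eq : BRge (followerUtility i₀ j₀ δ) δ x = {j₀} := by
    refine Set.eq_singleton_iff_unique_mem.mpr
      ⟨self_mem_BRge_followerUtility hδ.le hx, fun j hj => ?_⟩
    by_contra hne
    exact h.not_ge ((mem_BRge_followerUtility_iff_of_ne hδ hx hne).mp hj)
  rw [valBRge, BRge_eq, Set.image_singleton, csInf_singleton, leaderUtility,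
    mixU_bonusUtility_self hx, mul_one]

lemma valBRge_leaderUtility_nonpos_of_half_le (hδ : 0 < δ) (hx : x ∈ simplex m) (hj : j ≠ j₀)
    (h : 1 / 2 ≤ x i₀) :
    valBRge (leaderUtility i₀ j₀) (followerUtility i₀ j₀ δ) δ x ≤ 0 :=
  (valBRge_le_of_mem_BRge ((mem_BRge_followerUtility_iff_of_ne hδ hx hj).mpr h)).trans_eq
    (mixU_bonusUtility_of_ne hj 1 1)

lemma valBRge_leaderUtility_lt_three_halves (hδ : 0 < δ) (hx : x ∈ simplex m) (hj : j ≠ j₀) :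
    valBRge (leaderUtility i₀ j₀) (followerUtility i₀ j₀ δ) δ x < 3 / 2 := by
  rcases lt_or_ge (x i₀) (1 / 2) with h | h
  · rw [valBRge_leaderUtility_eq_of_lt_half hδ hx h]
    linarith
  · linarith [valBRge_leaderUtility_nonpos_of_half_le hδ hx hj h]

lemma isLUB_valBRge_leaderUtility_image_simplex {i₁ : Fin m} (hδ : 0 < δ) (hi : i₁ ≠ i₀)
    (hj : j ≠ j₀) :
    IsLUB (valBRge (leaderUtility i₀ j₀) (followerUtility i₀ j₀ δ) δ '' simplex m) (3 / 2) := by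
  refine ⟨Set.forall_mem_image.mpr fun x hx => (valBRge_leaderUtility_lt_three_halves hδ hx hj).le,
    fun b hb => le_of_forall_lt_imp_le_of_dense fun a ha => ?_⟩
  have weight_lt_half : max (a - 1) 0 < 1 / 2 := max_lt (by linarith) (by norm_num)
  obtain ⟨x, hx, hxi⟩ := exists_mem_simplex_apply_eq hi
    (⟨le_max_right _ _, by linarith⟩ : max (a - 1) 0 ∈ Set.Icc (0 : ℝ) 1)
  calc
    a ≤ 1 + max (a - 1) 0 := by linarith [le_max_left (a - 1) 0]
    _ = 1 + x i₀ := by rw [hxi]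
    _ = valBRge (leaderUtility i₀ j₀) (followerUtility i₀ j₀ δ) δ x :=
      (valBRge_leaderUtility_eq_of_lt_half hδ hx (hxi.trans_lt weight_lt_half)).symm
    _ ≤ b := hb (Set.mem_image_of_mem _ hx)

end Counterexample

theorem closed_br_rse_may_not_exist_general {m n : ℕ} (hm : 2 ≤ m) (hn : 2 ≤ n) {δ : ℝ}
    (hδ : 0 < δ) :
    ∃ ul uf : Fin m → Fin n → ℝ,
      ¬ ∃ x ∈ simplex m, valBRge ul uf δ x = sSup (valBRge ul uf δ '' simplex m) := by
  have : Nontrivial (Fin m) := Fin.nontrivial_iff_two_le.mpr hm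
  have : Nontrivial (Fin n) := Fin.nontrivial_iff_two_le.mpr hn
  obtain ⟨i₁, i₀, hi⟩ := exists_pair_ne (Fin m)
  obtain ⟨j₁, j₀, hj⟩ := exists_pair_ne (Fin n)
  refine ⟨leaderUtility i₀ j₀, followerUtility i₀ j₀ δ, ?_⟩
  rintro ⟨x, hx, attained⟩
  have isLUB := isLUB_valBRge_leaderUtility_image_simplex hδ hi hj
  rw [isLUB.csSup_eq ⟨_, Set.mem_image_of_mem _ hx⟩] at attained
  exact (valBRge_leaderUtility_lt_three_halves hδ hx hj).ne attained

/-- with the closed δ-optimal response set, the robust value may not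
be attained: the δ-RSE can fail to exist. -/
theorem closed_br_rse_may_not_exist :
    ∃ (ul uf : Fin 3 → Fin 2 → ℝ) (δ : ℝ), 0 < δ ∧
      ¬ ∃ x ∈ simplex 3, valBRge ul uf δ x = sSup (valBRge ul uf δ '' simplex 3) := by
  obtain ⟨ul, uf, not_attained⟩ :=
    closed_br_rse_may_not_exist_general (m := 3) (n := 2) (by norm_num) le_rfl one_pos
  exact ⟨ul, uf, 1, one_pos, not_attained⟩
end
end

section
/- There exists a finite Stackelberg game (u_l, u_f) with utilities in [0,1] and inducibility gap Δ > 0 such that the function δ ↦ u_RSE(δ), defined on (0, ∞), is discontinuous at some point δ₀ with δ₀ ≥ Δ. Hence the Lipschitz continuity of u_RSE on (0, Δ − 1/L] cannot in general be extended to δ ≥ Δ. -/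
/-!
Suppose the follower's utilities never differ by more than `d` for a fixed leader action. For
`δ > d` every follower action is a `δ`-optimal response, so `u_RSE(δ)` is the maximin value. At
`δ = d` the strict inequality defining `BR_δ` still excludes actions that are worse by exactly `d`,
so a leader who can induce an action with slack `d` can enforce it. When the follower is paid `1`
for copying the leader and `0` otherwise, every action is induced with slack `1`, hence
`Δ = d = 1`; if the leader is paid `1` for one particular follower action and `0` otherwise, then
`u_RSE` drops from `1` to `0` immediately to the right of `1`.
-/

open Finset Set

noncomputable section

section Simplex

variable {m n : ℕ} {x : Fin m → ℝ}

theorem single_mem_simplex (i : Fin m) : Pi.single i 1 ∈ simplex m :=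
  single_mem_stdSimplex ℝ i

theorem simplex_nonempty [Nonempty (Fin m)] : (simplex m).Nonempty :=
  ‹Nonempty (Fin m)›.elim fun i => ⟨_, single_mem_simplex i⟩

theorem sum_mul_le_of_mem_simplex (hx : x ∈ simplex m) {c : Fin m → ℝ} {b : ℝ}
    (hc : ∀ i, c i ≤ b) : ∑ i, x i * c i ≤ b :=
  calc ∑ i, x i * c i ≤ ∑ i, x i * b :=
        Finset.sum_le_sum fun i _ => mul_le_mul_of_nonneg_left (hc i) (hx.1 i)
    _ = b := by rw [← Finset.sum_mul, hx.2, one_mul]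

theorem mixU_single (u : Fin m → Fin n → ℝ) (i : Fin m) (j : Fin n) :
    mixU u (Pi.single i 1) j = u i j := by
  simp [mixU, Pi.single_apply]

theorem mixU_const (hx : x ∈ simplex m) (v : Fin n → ℝ) : mixU (fun _ => v) x = v := by
  ext j
  simp only [mixU]
  rw [← Finset.sum_mul, hx.2, one_mul]

theorem mixU_sub_mixU_le (hx : x ∈ simplex m) {u : Fin m → Fin n → ℝ} {j k : Fin n} {d : ℝ}
    (hd : ∀ i, u i j - u i k ≤ d) : mixU u x j - mixU u x k ≤ d := by
  simpa only [mixU, ← Finset.sum_sub_distrib, ← mul_sub] using sum_mul_le_of_mem_simplex hx hd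

end Simplex

section RobustValue

variable {m n : ℕ} {ul uf : Fin m → Fin n → ℝ} {x : Fin m → ℝ} {δ d : ℝ}

theorem BRd_nonempty [Nonempty (Fin n)] (hδ : 0 < δ) : (BRd uf δ x).Nonempty := by
  obtain ⟨j, hj⟩ := exists_eq_ciSup_of_finite (f := mixU uf x)
  exact ⟨j, by simp only [BRd, Set.mem_ofPred_eq, hj]; linarith⟩

theorem BRd_eq_univ (hx : x ∈ simplex m) (hd : ∀ i j k, uf i j - uf i k ≤ d) (hδ : d < δ) :
    BRd uf δ x = Set.univ := by
  refine Set.eq_univ_of_forall fun k => ?_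
  have : Nonempty (Fin n) := ⟨k⟩
  have hsup : ⨆ j, mixU uf x j ≤ mixU uf x k + d :=
    ciSup_le fun j => sub_le_iff_le_add'.1 (mixU_sub_mixU_le hx fun i => hd i j k)
  simp only [BRd, Set.mem_ofPred_eq]
  linarith

theorem uRSE_eq_uMM (hd : ∀ i j k, uf i j - uf i k ≤ d) (hδ : d < δ) :
    uRSE ul uf δ = uMM ul := by
  refine congrArg sSup (Set.image_congr fun x hx => ?_)
  rw [valBR, BRd_eq_univ hx hd hδ, Set.image_univ, sInf_range]

theorem bddAbove_valBR [Nonempty (Fin n)] (hδ : 0 < δ) :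
    BddAbove (valBR ul uf δ '' simplex m) := by
  obtain ⟨b, hb⟩ := (Set.finite_range (Function.uncurry ul)).bddAbove
  refine ⟨b, ?_⟩
  rintro _ ⟨x, hx, rfl⟩
  obtain ⟨j, hj⟩ := BRd_nonempty (uf := uf) (x := x) hδ
  calc valBR ul uf δ x ≤ mixU ul x j :=
        csInf_le (Set.toFinite _).bddBelow (Set.mem_image_of_mem _ hj)
    _ ≤ b := sum_mul_le_of_mem_simplex hx fun i => hb ⟨(i, j), rfl⟩

theorem not_continuousWithinAt_uRSE (hd : ∀ i j k, uf i j - uf i k ≤ d)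
    (hne : uRSE ul uf d ≠ uMM ul) : ¬ ContinuousWithinAt (uRSE ul uf) (Set.Ioi d) d := by
  intro hcont
  have hlim : Filter.Tendsto (uRSE ul uf) (nhdsWithin d (Set.Ioi d)) (nhds (uMM ul)) :=
    tendsto_nhdsWithin_congr (fun _ hδ => (uRSE_eq_uMM hd hδ).symm) tendsto_const_nhds
  exact hne (tendsto_nhds_unique hcont hlim)

theorem uMM_const [Nonempty (Fin m)] (v : Fin n → ℝ) : uMM (fun _ : Fin m => v) = ⨅ j, v j := by
  have hconst : ∀ x ∈ simplex m, ⨅ j, mixU (fun _ => v) x j = ⨅ j, v j :=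
    fun x hx => by rw [mixU_const hx]
  rw [uMM, Set.image_congr hconst, simplex_nonempty.image_const, csSup_singleton]

end RobustValue

section Inducibility

variable {m n : ℕ} {ul uf : Fin m → Fin n → ℝ} {x : Fin m → ℝ} {j : Fin n} {d : ℝ}

/-- The strategy `x` induces the follower action `j` with slack `d`: this is the condition imposed
on the witness `x^j` in the definition of the inducibility gap. -/
def Induces (uf : Fin m → Fin n → ℝ) (d : ℝ) (x : Fin m → ℝ) (j : Fin n) : Prop :=
  ∀ k ≠ j, mixU uf x k + d ≤ mixU uf x j

/-- The advantage of action `j` over the follower's best alternative at `x`, whose supremum over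
the simplex `indGap` minimizes in `j`. With a single follower action it is the junk value `0`. -/
def inducibilityMargin (uf : Fin m → Fin n → ℝ) (j : Fin n) (x : Fin m → ℝ) : ℝ :=
  ⨅ k : {k : Fin n // k ≠ j}, (mixU uf x j - mixU uf x k)

theorem Induces.iSup_mixU_eq (h : Induces uf d x j) (hd : 0 ≤ d) :
    ⨆ k, mixU uf x k = mixU uf x j := by
  have : Nonempty (Fin n) := ⟨j⟩
  refine le_antisymm (ciSup_le fun k => ?_) (le_ciSup (Set.finite_range _).bddAbove j)
  obtain rfl | hk := eq_or_ne k j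
  · exact le_rfl
  · linarith [h k hk]

theorem Induces.BRd_eq_singleton (h : Induces uf d x j) (hd : 0 < d) : BRd uf d x = {j} := by
  ext k
  simp only [BRd, h.iSup_mixU_eq hd.le, Set.mem_ofPred_eq, Set.mem_singleton_iff]
  constructor
  · intro hk
    by_contra hkj
    linarith [h k hkj]
  · rintro rfl
    linarith

theorem Induces.mixU_le_uRSE (h : Induces uf d x j) (hx : x ∈ simplex m) (hd : 0 < d) :
    mixU ul x j ≤ uRSE ul uf d := by
  have : Nonempty (Fin n) := ⟨j⟩
  have hval : valBR ul uf d x = mixU ul x j := by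
    rw [valBR, h.BRd_eq_singleton hd, Set.image_singleton, csInf_singleton]
  exact hval ▸ le_csSup (bddAbove_valBR hd) (Set.mem_image_of_mem _ hx)

variable [Nontrivial (Fin n)]

theorem Induces.le_inducibilityMargin (h : Induces uf d x j) : d ≤ inducibilityMargin uf j x := by
  obtain ⟨k₀, hk₀⟩ := exists_ne j
  have : Nonempty {k : Fin n // k ≠ j} := ⟨⟨k₀, hk₀⟩⟩
  exact le_ciInf fun k => le_sub_iff_add_le'.2 (h k k.2)

theorem inducibilityMargin_le (hx : x ∈ simplex m) (hd : ∀ i k, uf i j - uf i k ≤ d) :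
    inducibilityMargin uf j x ≤ d := by
  obtain ⟨k, hk⟩ := exists_ne j
  calc inducibilityMargin uf j x ≤ mixU uf x j - mixU uf x k :=
        ciInf_le (Set.finite_range _).bddBelow (⟨k, hk⟩ : {k : Fin n // k ≠ j})
    _ ≤ d := mixU_sub_mixU_le hx fun i => hd i k

theorem bddAbove_inducibilityMargin (uf : Fin m → Fin n → ℝ) (j : Fin n) :
    BddAbove (inducibilityMargin uf j '' simplex m) := by
  obtain ⟨b, hb⟩ :=
    (Set.finite_range fun p : Fin m × Fin n => uf p.1 j - uf p.1 p.2).bddAbove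
  refine ⟨b, ?_⟩
  rintro _ ⟨x, hx, rfl⟩
  exact inducibilityMargin_le hx fun i k => hb ⟨(i, k), rfl⟩

theorem le_indGap (h : ∀ j, ∃ x ∈ simplex m, Induces uf d x j) : d ≤ indGap uf :=
  le_ciInf fun j =>
    let ⟨_, hx, hind⟩ := h j
    le_csSup_of_le (bddAbove_inducibilityMargin uf j) (Set.mem_image_of_mem _ hx)
      hind.le_inducibilityMargin

theorem indGap_le [Nonempty (Fin m)] (hd : ∀ i j k, uf i j - uf i k ≤ d) : indGap uf ≤ d := by
  obtain ⟨j⟩ : Nonempty (Fin n) := inferInstance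
  refine ciInf_le_of_le (Set.finite_range _).bddBelow j
    (csSup_le (simplex_nonempty.image _) ?_)
  rintro _ ⟨x, hx, rfl⟩
  exact inducibilityMargin_le hx fun i => hd i j

end Inducibility

section MatchingGame

variable {n : ℕ}

/-- The follower utility that rewards copying the leader's action. It attains the largest
inducibility gap possible for utilities in `[0, 1]`. -/
def matchingUtility (n : ℕ) : Fin n → Fin n → ℝ := fun i => Pi.single i 1

theorem single_one_mem_Icc (i j : Fin n) : (Pi.single i 1 : Fin n → ℝ) j ∈ Set.Icc (0 : ℝ) 1 := by
  rw [Pi.single_apply]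
  split_ifs <;> simp

theorem iInf_single_one [Nontrivial (Fin n)] (i : Fin n) :
    ⨅ j, (Pi.single i 1 : Fin n → ℝ) j = 0 := by
  obtain ⟨k, hk⟩ := exists_ne i
  refine le_antisymm ?_ (le_ciInf fun j => (single_one_mem_Icc i j).1)
  exact ciInf_le_of_le (Set.finite_range _).bddBelow k (Pi.single_eq_of_ne hk 1).le

theorem matchingUtility_sub_le (i j k : Fin n) :
    matchingUtility n i j - matchingUtility n i k ≤ 1 := by
  have hj : matchingUtility n i j ≤ 1 := (single_one_mem_Icc i j).2
  have hk : 0 ≤ matchingUtility n i k := (single_one_mem_Icc i k).1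
  linarith

theorem induces_matchingUtility (j : Fin n) :
    Induces (matchingUtility n) 1 (Pi.single j 1) j := by
  intro k hk
  simp [mixU_single, matchingUtility, hk]

variable [Nontrivial (Fin n)]

theorem indGap_matchingUtility : indGap (matchingUtility n) = 1 :=
  le_antisymm (indGap_le matchingUtility_sub_le)
    (le_indGap fun j => ⟨_, single_mem_simplex j, induces_matchingUtility j⟩)

theorem uMM_lt_uRSE_matchingUtility (a : Fin n) :
    uMM (fun _ : Fin n => (Pi.single a 1 : Fin n → ℝ)) <
      uRSE (fun _ => Pi.single a 1) (matchingUtility n) 1 :=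
  calc uMM (fun _ : Fin n => (Pi.single a 1 : Fin n → ℝ)) = 0 := by
        rw [uMM_const, iInf_single_one]
    _ < 1 := one_pos
    _ = mixU (fun _ : Fin n => Pi.single a 1) (Pi.single a 1) a := by
        rw [mixU_single, Pi.single_eq_same]
    _ ≤ uRSE (fun _ => Pi.single a 1) (matchingUtility n) 1 :=
        (induces_matchingUtility a).mixU_le_uRSE (single_mem_simplex a) one_pos

end MatchingGame

/-- `u_RSE` (as a function on `(0, ∞)`) can be discontinuous at some
point `δ₀ ≥ Δ`, even when the inducibility gap `Δ` is positive. -/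
theorem uRSE_discontinuous_beyond_gap :
    ∃ (m n : ℕ) (ul uf : Fin m → Fin n → ℝ),
      (∀ i j, ul i j ∈ Set.Icc (0:ℝ) 1) ∧ (∀ i j, uf i j ∈ Set.Icc (0:ℝ) 1) ∧
      0 < indGap uf ∧
      ∃ δ₀ : ℝ, indGap uf ≤ δ₀ ∧
        ¬ ContinuousWithinAt (uRSE ul uf) (Set.Ioi 0) δ₀ := by
  refine ⟨2, 2, fun _ => Pi.single 1 1, matchingUtility 2, fun _ => single_one_mem_Icc 1,
    single_one_mem_Icc, one_pos.trans_eq indGap_matchingUtility.symm, 1,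
    indGap_matchingUtility.le, ?_⟩
  intro hcont
  exact not_continuousWithinAt_uRSE matchingUtility_sub_le (uMM_lt_uRSE_matchingUtility 1).ne'
    (hcont.mono (Set.Ioi_subset_Ioi zero_le_one))
end
end
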